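/- Let N be a Lévy density with ∫_ℝ |x| N(x) dx < ∞ and g(x) = xN(x). For Δ > 0 let P_Δ be the distribution with characteristic function ψ_Δ(u) = exp(Δ ∫_ℝ (e^{iux} − 1) N(x) dx) and Z₁^Δ a random variable with law P_Δ. Then the signed measure μ_Δ(dx) = Δ⁻¹ x P_Δ(dx) is absolutely continuous with density h_Δ given by h_Δ(x) = ∫ g(x − y) P_Δ(dy) = E[g(x − Z₁^Δ)]. -/

import Mathlib

open MeasureTheory Real Filter Finset Asymptotics
open scoped Topology

noncomputable section

namespace LevyAdapt

/-- Fourier transform `g*(u) = ∫ e^{iux} g(x) dx`. -/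
def ft (g : ℝ → ℝ) (u : ℝ) : ℂ :=
  ∫ x : ℝ, Complex.exp (Complex.I * u * x) * (g x : ℂ)

/-- Scaled kernel `K_h(x) = h⁻¹ K(x/h)`. -/
def sk (K : ℝ → ℝ) (h x : ℝ) : ℝ := h⁻¹ * K (x / h)

/-- L¹ norm. -/
def nl1 (f : ℝ → ℝ) : ℝ := ∫ x : ℝ, |f x|

/-- Squared L² norm. -/
def nl2sq (f : ℝ → ℝ) : ℝ := ∫ x : ℝ, (f x) ^ 2

/-- Sup norm. -/
def nsup (f : ℝ → ℝ) : ℝ := ⨆ x : ℝ, |f x|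

/-- L¹ norm of a complex-valued function on ℝ. -/
def cnl1 (f : ℝ → ℂ) : ℝ := ∫ u : ℝ, ‖f u‖

/-- Squared L² norm of a complex-valued function on ℝ. -/
def cnl2sq (f : ℝ → ℂ) : ℝ := ∫ u : ℝ, ‖f u‖ ^ 2

/-- The largest integer strictly smaller than `β` (for `β > 0`). -/
def hfloor (β : ℝ) : ℕ := ⌈β⌉₊ - 1

/-- The Hölder class `H(β, L)`: with `l = hfloor β`, the `l`-th derivative exists and is
`(β - l)`-Hölder with constant `L`. -/
def Holder (β L : ℝ) (f : ℝ → ℝ) : Prop :=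
  (∀ m : ℕ, m < hfloor β → Differentiable ℝ (iteratedDeriv m f)) ∧
  ∀ x y : ℝ,
    |iteratedDeriv (hfloor β) f x - iteratedDeriv (hfloor β) f y| ≤
      L * |x - y| ^ (β - (hfloor β : ℝ))

/-- Assumption G1: `g ∈ L²`. -/
def G1 (g : ℝ → ℝ) : Prop := Integrable (fun x : ℝ => (g x) ^ 2)

/-- Assumption G2: `g*` is differentiable a.e. and its derivative is integrable. -/
def G2 (g : ℝ → ℝ) : Prop :=
  (∀ᵐ u : ℝ, DifferentiableAt ℝ (ft g) u) ∧ Integrable (deriv (ft g))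

/-- Assumption G3(p): `∫ |x|^(p-1) |g(x)| dx < ∞`. -/
def G3 (p : ℕ) (g : ℝ → ℝ) : Prop :=
  Integrable (fun x : ℝ => |x| ^ (p - 1) * |g x|)

/-- Assumption G5: `g'` exists and is uniformly bounded. -/
def G5 (g : ℝ → ℝ) : Prop :=
  Differentiable ℝ g ∧ BddAbove (Set.range fun x : ℝ => |deriv g x|)

/-- Assumption K1: `K ∈ L¹ ∩ L² ∩ L^∞` and `K* ∈ L¹`. -/
def K1 (K : ℝ → ℝ) : Prop :=
  Measurable K ∧ Integrable K ∧ Integrable (fun x : ℝ => (K x) ^ 2) ∧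
    BddAbove (Set.range fun x : ℝ => |K x|) ∧ Integrable (ft K)

/-- `K` is a kernel of order `m`. -/
def KernelOrder (m : ℕ) (K : ℝ → ℝ) : Prop :=
  (∀ j : ℕ, j ≤ m → Integrable (fun t : ℝ => t ^ j * K t)) ∧
  (∫ t : ℝ, K t) = 1 ∧
  ∀ j : ℕ, 1 ≤ j → j ≤ m → (∫ t : ℝ, t ^ j * K t) = 0

/-- Assumption K2(α): `K` is a kernel of order `hfloor α` and `∫ |x|^α |K(x)| dx < ∞`. -/
def K2 (α : ℝ) (K : ℝ → ℝ) : Prop :=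
  KernelOrder (hfloor α) K ∧ Integrable (fun x : ℝ => |x| ^ α * |K x|)

/-- `P` is the law of an increment of length `Δ` of the pure-jump Lévy process with Lévy
density `N`, characterized through its characteristic function. -/
def IncrementLawN (P : Measure ℝ) (Δ : ℝ) (N : ℝ → ℝ) : Prop :=
  ∀ u : ℝ,
    (∫ x : ℝ, Complex.exp (Complex.I * u * x) ∂P) =
      Complex.exp ((Δ : ℂ) * ∫ x : ℝ, (Complex.exp (Complex.I * u * x) - 1) * (N x : ℂ))

/-- Increment law expressed through `g(x) = x N(x)`, i.e. `N(x) = g(x)/x`. -/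
def IncrementLaw (P : Measure ℝ) (Δ : ℝ) (g : ℝ → ℝ) : Prop :=
  IncrementLawN P Δ fun x => g x / x

/-- The `n`-sample (i.i.d.) product measure. -/
def pm (P : Measure ℝ) [SigmaFinite P] (n : ℕ) : Measure (Fin n → ℝ) :=
  Measure.pi fun _ => P

/-- The kernel estimator `ĝ_h(x) = (nΔ)⁻¹ ∑ₖ Zₖ K_h(x - Zₖ)`. -/
def ghat (K : ℝ → ℝ) (h Δ : ℝ) {n : ℕ} (z : Fin n → ℝ) (x : ℝ) : ℝ :=
  ((n : ℝ) * Δ)⁻¹ * ∑ k : Fin n, z k * sk K h (x - z k)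

/-- The auxiliary estimator `ĝ_{h,h'}(x)` using the convolved kernel `K_{h'} ⋆ K_h`. -/
def ghat2 (K : ℝ → ℝ) (h h' Δ : ℝ) {n : ℕ} (z : Fin n → ℝ) (x : ℝ) : ℝ :=
  ((n : ℝ) * Δ)⁻¹ *
    ∑ k : Fin n, z k * ∫ y : ℝ, sk K h' y * sk K h (x - z k - y)

/-- Mean `E[ĝ_h(x)]` of the kernel estimator. -/
def mghat (K : ℝ → ℝ) (h Δ : ℝ) (n : ℕ) (P : Measure ℝ) [SigmaFinite P] (x : ℝ) : ℝ :=
  ∫ z : Fin n → ℝ, ghat K h Δ z x ∂(pm P n)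

/-- Mean `E[ĝ_{h,h'}(x)]` of the auxiliary estimator. -/
def mghat2 (K : ℝ → ℝ) (h h' Δ : ℝ) (n : ℕ) (P : Measure ℝ) [SigmaFinite P] (x : ℝ) : ℝ :=
  ∫ z : Fin n → ℝ, ghat2 K h h' Δ z x ∂(pm P n)

/-- The pointwise mean squared error `E[(ĝ_h(x) - g(x))²]`. -/
def mse (K : ℝ → ℝ) (h Δ : ℝ) (n : ℕ) (P : Measure ℝ) [SigmaFinite P]
    (g : ℝ → ℝ) (x : ℝ) : ℝ :=
  ∫ z : Fin n → ℝ, (ghat K h Δ z x - g x) ^ 2 ∂(pm P n)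

/-- The variance `Var[ĝ_h(x)]`. -/
def varghat (K : ℝ → ℝ) (h Δ : ℝ) (n : ℕ) (P : Measure ℝ) [SigmaFinite P] (x : ℝ) : ℝ :=
  ∫ z : Fin n → ℝ, (ghat K h Δ z x - mghat K h Δ n P x) ^ 2 ∂(pm P n)

/-- The constant `c₁ = 2 (L/⌊β⌋! ∫|K(v)||v|^β dv)²`. -/
def c1 (K : ℝ → ℝ) (β L : ℝ) : ℝ :=
  2 * (L / (Nat.factorial (hfloor β) : ℝ) * ∫ v : ℝ, |K v| * |v| ^ β) ^ 2

/-- The constant `c₁' = 2 (2‖g'‖_∞ ‖g‖₁ ‖K‖₁)²`. -/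
def c1' (K g : ℝ → ℝ) : ℝ := 2 * (2 * nsup (deriv g) * nl1 g * nl1 K) ^ 2

/-- The constant `c₂ = ‖(g*)'‖₁ ‖K‖₂² / (2π)`. -/
def c2 (K g : ℝ → ℝ) : ℝ := cnl1 (deriv (ft g)) * nl2sq K / (2 * π)

/-- The constant `c₂' = ‖K‖₂² ‖g‖₂²`. -/
def c2' (K g : ℝ → ℝ) : ℝ := nl2sq K * nl2sq g

/-- The constant `C₀ = (c/(2π)) ‖K‖₂² (‖(g*)'‖₁ + ‖g*‖₂²)`. -/
def C0 (c : ℝ) (K g : ℝ → ℝ) : ℝ :=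
  c / (2 * π) * nl2sq K * (cnl1 (deriv (ft g)) + cnl2sq (ft g))

/-- The penalty `V(h) = C₀ log(nΔ) / (nhΔ)`. -/
def Vfun (c : ℝ) (K g : ℝ → ℝ) (n : ℕ) (Δ h : ℝ) : ℝ :=
  C0 c K g * Real.log ((n : ℝ) * Δ) / ((n : ℝ) * h * Δ)

/-- The bandwidth collection `H = {j/M : 1 ≤ j ≤ M}`. -/
def bset (M : ℕ) : Finset ℝ := (Finset.Icc 1 M).image fun j : ℕ => (j : ℝ) / (M : ℝ)

/-- The quantity `A(h, x₀) = sup_{h' ∈ H} [ |ĝ_{h,h'}(x₀) - ĝ_{h'}(x₀)|² - V(h') ]₊`. -/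
def Afun (K : ℝ → ℝ) (Δ : ℝ) (H : Finset ℝ) (V : ℝ → ℝ) {n : ℕ}
    (z : Fin n → ℝ) (x h : ℝ) : ℝ :=
  ⨆ h' ∈ H, max ((ghat2 K h h' Δ z x - ghat K h' Δ z x) ^ 2 - V h') 0

/-- Average `Δ̄` of the sampling intervals. -/
def dbar {n : ℕ} (Δs : Fin n → ℝ) : ℝ := (n : ℝ)⁻¹ * ∑ k, Δs k

/-- Average `Δ²‾` of the squared sampling intervals. -/
def d2bar {n : ℕ} (Δs : Fin n → ℝ) : ℝ := (n : ℝ)⁻¹ * ∑ k, (Δs k) ^ 2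

/-- The truncation level `μ_n(h)`. -/
def mulev (c : ℝ) (K g : ℝ → ℝ) (n : ℕ) (Δ h : ℝ) : ℝ :=
  nl2sq K * (cnl1 (deriv (ft g)) + cnl2sq (ft g)) /
    (2 * π * nsup K * Real.sqrt (Vfun c K g n Δ h / 6))

/-- The truncated summand `W(h)` as a function of a single observation. -/
def Wtr (c : ℝ) (K g : ℝ → ℝ) (n : ℕ) (Δ h x₀ x : ℝ) : ℝ :=
  if |x| ≤ mulev c K g n Δ h then x / Δ * sk K h (x₀ - x) else 0

/-- The remainder summand `T(h)` as a function of a single observation. -/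
def Ttr (c : ℝ) (K g : ℝ → ℝ) (n : ℕ) (Δ h x₀ x : ℝ) : ℝ :=
  if mulev c K g n Δ h < |x| then x / Δ * sk K h (x₀ - x) else 0

/-- The empirical estimator of `‖(g*)'‖₁`. -/
def estDeriv (Δ : ℝ) {n : ℕ} (z : Fin n → ℝ) (hband : ℝ) : ℝ :=
  ∫ u : ℝ, ‖(((n : ℝ) * Δ)⁻¹ : ℂ) *
      ∑ k : Fin n, (z k : ℂ) ^ 2 *
        (Set.indicator (Set.Icc (-1 : ℝ) 1) (fun _ => (1 : ℂ)) (u * hband)) *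
        Complex.exp (Complex.I * u * z k)‖

/-- The empirical estimator of `‖g*‖₂²`. -/
def estL2 (Δ : ℝ) {n : ℕ} (z : Fin n → ℝ) (hband : ℝ) : ℝ :=
  ∫ u : ℝ, ‖(((n : ℝ) * Δ)⁻¹ : ℂ) *
      ∑ k : Fin n, (z k : ℂ) *
        (Set.indicator (Set.Icc (-1 : ℝ) 1) (fun _ => (1 : ℂ)) (u * hband)) *
        Complex.exp (Complex.I * u * z k)‖ ^ 2

/-- The data-driven penalty `V(h)` built with the estimated constant `C₀`. -/
def VfunHat (c : ℝ) (K : ℝ → ℝ) (n : ℕ) (Δ : ℝ) {m : ℕ} (z : Fin m → ℝ) (h : ℝ) : ℝ :=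
  c / (2 * π) * nl2sq K *
      (estDeriv Δ z (((n : ℝ) * Δ) ^ (-(1/3 : ℝ))) + estL2 Δ z (((n : ℝ) * Δ) ^ (-(1/3 : ℝ)))) *
    Real.log ((n : ℝ) * Δ) / ((n : ℝ) * h * Δ)

/-!
Differentiating `ψ(u) = exp(Δ ∫ (e^{iux} - 1) N(x) dx)` gives `ψ' = i Δ g* ψ`, and `Δ g* ψ` is the
Fourier transform of the convolution `Δ (g ⋆ P)`. If `P` is known to have a first moment, then also
`ψ' = i ∫ e^{iux} x P(dx)`, and uniqueness of transforms gives `x P(dx) = Δ (g ⋆ P)(x) dx`. To do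
without this moment, average both expressions for `ψ` and `ψ'` at `u + s` over a standard Gaussian
`s`: the transforms become those of `e^{-x²/2} P(dx)`, which has all moments, and of
`Δ e^{-x²/2} (g ⋆ P)(x) dx`. Hence these measures satisfy
`x e^{-x²/2} P(dx) = Δ e^{-x²/2} (g ⋆ P)(x) dx`, and the positive weight cancels; that `P` has a
first moment is then a consequence.
-/

section ExpBounds

lemma norm_exp_I_mul_mul (u x : ℝ) : ‖Complex.exp (Complex.I * u * x)‖ = 1 := by
  have h := Complex.norm_exp_I_mul_ofReal (u * x)
  rwa [Complex.ofReal_mul, ← mul_assoc] at h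

lemma norm_exp_I_mul_mul_sub_one_le (u x : ℝ) :
    ‖Complex.exp (Complex.I * u * x) - 1‖ ≤ |u| * |x| := by
  have h := Real.norm_exp_I_mul_ofReal_sub_one_le (x := u * x)
  rwa [Complex.ofReal_mul, ← mul_assoc, Real.norm_eq_abs, abs_mul] at h

lemma norm_exp_neg_sq_div_two_le_one (x : ℝ) : ‖Real.exp (-x ^ 2 / 2)‖ ≤ 1 := by
  rw [Real.norm_eq_abs, Real.abs_exp, Real.exp_le_one_iff]
  nlinarith [sq_nonneg x]

lemma norm_mul_exp_neg_sq_div_two_le_one (x : ℝ) : ‖x * Real.exp (-x ^ 2 / 2)‖ ≤ 1 := by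
  have hx : |x| ≤ Real.exp (x ^ 2 / 2) := by
    nlinarith [Real.add_one_le_exp (x ^ 2 / 2), sq_nonneg (|x| - 1), sq_abs x]
  calc ‖x * Real.exp (-x ^ 2 / 2)‖
      = |x| * Real.exp (-x ^ 2 / 2) := by rw [Real.norm_eq_abs, abs_mul, Real.abs_exp]
    _ ≤ Real.exp (x ^ 2 / 2) * Real.exp (-x ^ 2 / 2) := by gcongr
    _ = 1 := by rw [← Real.exp_add, ← add_div, add_neg_cancel, zero_div, Real.exp_zero]

end ExpBounds

section SignedDensityEq

variable {α : Type*} [MeasurableSpace α] {μ ν : Measure α} {f h w : α → ℝ}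

/-- The identity `f μ = h ν` of signed measures, with the negative parts moved across so that it is
an identity of positive measures: it then makes sense when `f` or `h` is not integrable. -/
def SignedDensityEq (μ : Measure α) (f : α → ℝ) (ν : Measure α) (h : α → ℝ) : Prop :=
  (μ.withDensity fun x => ENNReal.ofReal (f x)) + (ν.withDensity fun x => ENNReal.ofReal (-h x)) =
    (ν.withDensity fun x => ENNReal.ofReal (h x)) + μ.withDensity fun x => ENNReal.ofReal (-f x)

lemma SignedDensityEq.neg (H : SignedDensityEq μ f ν h) :
    SignedDensityEq μ (fun x => -f x) ν fun x => -h x := by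
  simp only [SignedDensityEq, neg_neg]
  rw [add_comm, ← H, add_comm]

lemma withDensity_ofReal_mul_withDensity_inv (hf : AEMeasurable f μ) (hw : Measurable w)
    (hw0 : ∀ x, 0 < w x) :
    (μ.withDensity fun x => ENNReal.ofReal (f x * w x)).withDensity
        (fun x => (ENNReal.ofReal (w x))⁻¹) =
      μ.withDensity fun x => ENNReal.ofReal (f x) := by
  have hmul : (fun x => ENNReal.ofReal (f x * w x)) =
      (fun x => ENNReal.ofReal (f x)) * fun x => ENNReal.ofReal (w x) :=
    funext fun x => ENNReal.ofReal_mul' (hw0 x).le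
  rw [hmul, withDensity_mul₀ hf.ennreal_ofReal hw.ennreal_ofReal.aemeasurable]
  exact withDensity_inv_same hw.ennreal_ofReal
    (Eventually.of_forall fun x => (ENNReal.ofReal_pos.2 (hw0 x)).ne')
    (Eventually.of_forall fun x => ENNReal.ofReal_ne_top)

lemma SignedDensityEq.of_mul_right (hf : AEMeasurable f μ) (hh : AEMeasurable h ν)
    (hw : Measurable w) (hw0 : ∀ x, 0 < w x)
    (H : SignedDensityEq μ (fun x => f x * w x) ν fun x => h x * w x) :
    SignedDensityEq μ f ν h := by
  have hf' : AEMeasurable (fun x => -f x) μ := hf.neg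
  have hh' : AEMeasurable (fun x => -h x) ν := hh.neg
  have H' := congrArg (fun ρ : Measure α => ρ.withDensity fun x => (ENNReal.ofReal (w x))⁻¹) H
  simp only [withDensity_add_measure, ← neg_mul] at H'
  rwa [withDensity_ofReal_mul_withDensity_inv hf hw hw0,
    withDensity_ofReal_mul_withDensity_inv hf' hw hw0,
    withDensity_ofReal_mul_withDensity_inv hh hw hw0,
    withDensity_ofReal_mul_withDensity_inv hh' hw hw0] at H'

lemma SignedDensityEq.lintegral_ofReal_lt_top (H : SignedDensityEq μ f ν h) (hf : Measurable f)
    (hh : Integrable h ν) : ∫⁻ x, ENNReal.ofReal (f x) ∂μ < ⊤ := by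
  set S : Set α := {x | 0 < f x}
  have hS : MeasurableSet S := measurableSet_lt measurable_const hf
  have hneg : ∫⁻ x in S, ENNReal.ofReal (-f x) ∂μ = 0 :=
    setLIntegral_eq_zero hS fun x hx => ENNReal.ofReal_of_nonpos (neg_nonpos.2 (le_of_lt hx))
  have hHS := congrArg (fun ρ : Measure α => ρ S) H
  simp only [Measure.add_apply, withDensity_apply _ hS, hneg, add_zero] at hHS
  calc ∫⁻ x, ENNReal.ofReal (f x) ∂μ
      = ∫⁻ x in S, ENNReal.ofReal (f x) ∂μ :=
        (setLIntegral_eq_of_support_subset fun x hx => by simpa [S] using hx).symm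
    _ ≤ ∫⁻ x in S, ENNReal.ofReal (h x) ∂ν := hHS ▸ le_self_add
    _ ≤ ∫⁻ x, ENNReal.ofReal (h x) ∂ν := setLIntegral_le_lintegral _ _
    _ < ⊤ := hh.lintegral_lt_top

lemma SignedDensityEq.integrable (H : SignedDensityEq μ f ν h) (hf : Measurable f)
    (hh : Integrable h ν) : Integrable f μ := by
  refine ⟨hf.aestronglyMeasurable, ?_⟩
  rw [hasFiniteIntegral_iff_norm]
  calc ∫⁻ x, ENNReal.ofReal ‖f x‖ ∂μ
      ≤ ∫⁻ x, ENNReal.ofReal (f x) + ENNReal.ofReal (-f x) ∂μ := lintegral_mono fun x => by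
        rcases abs_cases (f x) with ⟨hx, -⟩ | ⟨hx, -⟩ <;> simp [hx]
    _ = ∫⁻ x, ENNReal.ofReal (f x) ∂μ + ∫⁻ x, ENNReal.ofReal (-f x) ∂μ :=
        lintegral_add_left hf.ennreal_ofReal _
    _ < ⊤ := ENNReal.add_lt_top.2 ⟨H.lintegral_ofReal_lt_top hf hh,
        H.neg.lintegral_ofReal_lt_top hf.neg hh.neg⟩

lemma SignedDensityEq.setIntegral_eq (H : SignedDensityEq μ f ν h) (hf : Integrable f μ)
    (hh : Integrable h ν) {A : Set α} (hA : MeasurableSet A) :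
    ∫ x in A, f x ∂μ = ∫ x in A, h x ∂ν := by
  have hf' : Integrable (fun x => -f x) μ := hf.neg
  have hh' : Integrable (fun x => -h x) ν := hh.neg
  have hHA := congrArg (fun ρ : Measure α => (ρ A).toReal) H
  simp only [Measure.add_apply, withDensity_apply _ hA] at hHA
  rw [ENNReal.toReal_add hf.integrableOn.lintegral_lt_top.ne
      hh'.integrableOn.lintegral_lt_top.ne,
    ENNReal.toReal_add hh.integrableOn.lintegral_lt_top.ne
      hf'.integrableOn.lintegral_lt_top.ne] at hHA
  rw [integral_eq_lintegral_pos_part_sub_lintegral_neg_part hf.integrableOn,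
    integral_eq_lintegral_pos_part_sub_lintegral_neg_part hh.integrableOn]
  linarith

end SignedDensityEq

section FourierStieltjes

/-- The Fourier–Stieltjes transform `u ↦ ∫ e^{iux} f(x) μ(dx)` of the signed measure `f μ`, a common
generalisation of `ft` (for `μ` the Lebesgue measure) and of `charFun` (for `f = 1`). -/
def fourierStieltjes (μ : Measure ℝ) (f : ℝ → ℝ) (u : ℝ) : ℂ :=
  ∫ x : ℝ, Complex.exp (Complex.I * u * x) * (f x : ℂ) ∂μ

variable {μ ν : Measure ℝ} {f h : ℝ → ℝ}

lemma charFun_eq_integral_exp_I_mul_mul (μ : Measure ℝ) (u : ℝ) :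
    charFun μ u = ∫ x : ℝ, Complex.exp (Complex.I * u * x) ∂μ := by
  rw [charFun_apply_real]
  congr with x
  ring_nf

lemma fourierStieltjes_one (μ : Measure ℝ) : fourierStieltjes μ (fun _ => 1) = charFun μ := by
  funext u
  simp only [fourierStieltjes, charFun_eq_integral_exp_I_mul_mul, Complex.ofReal_one, mul_one]

lemma fourierStieltjes_const_mul (c : ℝ) (u : ℝ) :
    fourierStieltjes μ (fun x => c * f x) u = c * fourierStieltjes μ f u := by
  simp only [fourierStieltjes, Complex.ofReal_mul, mul_left_comm _ (c : ℂ)]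
  exact integral_const_mul _ _

lemma integrable_exp_mul (hf : Integrable f μ) (u : ℝ) :
    Integrable (fun x : ℝ => Complex.exp (Complex.I * u * x) * (f x : ℂ)) μ :=
  hf.ofReal.bdd_mul (c := 1) (by fun_prop)
    (Eventually.of_forall fun x => (norm_exp_I_mul_mul u x).le)

lemma charFun_add_measure (μ ν : Measure ℝ) [IsFiniteMeasure μ] [IsFiniteMeasure ν] (u : ℝ) :
    charFun (μ + ν) u = charFun μ u + charFun ν u := by
  simp only [← fourierStieltjes_one, fourierStieltjes]
  exact integral_add_measure (integrable_exp_mul (integrable_const 1) u)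
    (integrable_exp_mul (integrable_const 1) u)

lemma norm_fourierStieltjes_le (μ : Measure ℝ) (f : ℝ → ℝ) (u : ℝ) :
    ‖fourierStieltjes μ f u‖ ≤ ∫ x, |f x| ∂μ := by
  refine (norm_integral_le_integral_norm _).trans_eq ?_
  simp only [norm_mul, norm_exp_I_mul_mul, one_mul, Complex.norm_real, Real.norm_eq_abs]

lemma fourierStieltjes_eq_charFun_sub_charFun (hf : Integrable f μ) (u : ℝ) :
    fourierStieltjes μ f u = charFun (μ.withDensity fun x => ENNReal.ofReal (f x)) u -
      charFun (μ.withDensity fun x => ENNReal.ofReal (-f x)) u := by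
  have hm : AEMeasurable f μ := hf.aestronglyMeasurable.aemeasurable
  have hm' : AEMeasurable (fun x => -f x) μ := hm.neg
  simp only [charFun_eq_integral_exp_I_mul_mul, fourierStieltjes]
  rw [integral_withDensity_eq_integral_toReal_smul₀ hm.ennreal_ofReal (by simp),
    integral_withDensity_eq_integral_toReal_smul₀ hm'.ennreal_ofReal (by simp)]
  simp only [ENNReal.toReal_ofReal', Complex.real_smul, mul_comm (Complex.ofReal _)]
  rw [← integral_sub (integrable_exp_mul hf.pos_part u) (integrable_exp_mul hf.neg_part u)]
  congr with x
  rw [← mul_sub, ← Complex.ofReal_sub, max_zero_sub_max_neg_zero_eq_self]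

lemma signedDensityEq_of_fourierStieltjes_eq (hf : Integrable f μ) (hh : Integrable h ν)
    (H : fourierStieltjes μ f = fourierStieltjes ν h) : SignedDensityEq μ f ν h := by
  have := isFiniteMeasure_withDensity_ofReal hf.2
  have := isFiniteMeasure_withDensity_ofReal hh.2
  have : IsFiniteMeasure (μ.withDensity fun x => ENNReal.ofReal (-f x)) :=
    isFiniteMeasure_withDensity_ofReal hf.neg.2
  have : IsFiniteMeasure (ν.withDensity fun x => ENNReal.ofReal (-h x)) :=
    isFiniteMeasure_withDensity_ofReal hh.neg.2
  refine Measure.ext_of_charFun (funext fun u => ?_)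
  have Hu := congrFun H u
  rw [fourierStieltjes_eq_charFun_sub_charFun hf,
    fourierStieltjes_eq_charFun_sub_charFun hh] at Hu
  rw [charFun_add_measure, charFun_add_measure]
  linear_combination Hu

lemma hasDerivAt_integral_exp_sub_one_mul (hf : AEStronglyMeasurable f μ)
    (hxf : Integrable (fun x => x * f x) μ) (u : ℝ) :
    HasDerivAt (fun u : ℝ => ∫ x : ℝ, (Complex.exp (Complex.I * u * x) - 1) * (f x : ℂ) ∂μ)
      (Complex.I * fourierStieltjes μ (fun x => x * f x) u) u := by
  have hf' : AEStronglyMeasurable (fun x => (f x : ℂ)) μ :=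
    Complex.continuous_ofReal.comp_aestronglyMeasurable hf
  have hmeas : ∀ v : ℝ, AEStronglyMeasurable
      (fun x : ℝ => (Complex.exp (Complex.I * v * x) - 1) * (f x : ℂ)) μ := fun v =>
    (Continuous.aestronglyMeasurable (by fun_prop)).mul hf'
  have hint : Integrable (fun x : ℝ => (Complex.exp (Complex.I * u * x) - 1) * (f x : ℂ)) μ := by
    refine (hxf.norm.const_mul |u|).mono' (hmeas u) (Eventually.of_forall fun x => ?_)
    rw [norm_mul, Complex.norm_real, norm_mul, ← mul_assoc]
    exact mul_le_mul_of_nonneg_right (norm_exp_I_mul_mul_sub_one_le u x) (norm_nonneg _)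
  have hderiv : ∀ x v : ℝ, HasDerivAt
      (fun v : ℝ => (Complex.exp (Complex.I * v * x) - 1) * (f x : ℂ))
      (Complex.I * (Complex.exp (Complex.I * v * x) * ((x * f x : ℝ) : ℂ))) v := fun x v => by
    have hlin : HasDerivAt (fun v : ℝ => Complex.I * v * x) (Complex.I * 1 * x) v :=
      ((Complex.ofRealCLM.hasDerivAt (x := v)).const_mul Complex.I).mul_const _
    refine ((hlin.cexp.sub_const 1).mul_const (f x : ℂ)).congr_deriv ?_
    push_cast
    ring
  rw [fourierStieltjes, ← integral_const_mul]
  refine (hasDerivAt_integral_of_dominated_loc_of_deriv_le univ_mem (Eventually.of_forall hmeas)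
    hint ((integrable_exp_mul hxf u).const_mul _).aestronglyMeasurable
    (Eventually.of_forall fun x v _ => ?_) hxf.norm
    (Eventually.of_forall fun x v _ => hderiv x v)).2
  rw [norm_mul, norm_mul, norm_exp_I_mul_mul, Complex.norm_I, Complex.norm_real, one_mul, one_mul]

lemma hasDerivAt_fourierStieltjes (hf : Integrable f μ) (hxf : Integrable (fun x => x * f x) μ)
    (u : ℝ) :
    HasDerivAt (fourierStieltjes μ f) (Complex.I * fourierStieltjes μ (fun x => x * f x) u) u := by
  have hfc : Integrable (fun x => (f x : ℂ)) μ := hf.ofReal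
  refine ((hasDerivAt_integral_exp_sub_one_mul hf.aestronglyMeasurable hxf u).add_const
    (∫ x, (f x : ℂ) ∂μ)).congr_of_eventuallyEq (Eventually.of_forall fun v => ?_)
  simp only [sub_mul, one_mul, fourierStieltjes]
  rw [integral_sub (integrable_exp_mul hf v) hfc, sub_add_cancel]

lemma fourierStieltjes_integral_sub {P : Measure ℝ} [IsFiniteMeasure P] {g : ℝ → ℝ}
    (hg : Integrable g) (u : ℝ) :
    fourierStieltjes volume (fun x => ∫ y, g (x - y) ∂P) u = charFun P u * ft g u := by
  have hexp : Integrable (fun x : ℝ => Complex.exp (Complex.I * u * x)) P := by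
    simpa using integrable_exp_mul (integrable_const (1 : ℝ)) u
  have hconv := integral_convolution (ContinuousLinearMap.mul ℂ ℂ) hexp (integrable_exp_mul hg u)
  rw [ContinuousLinearMap.mul_apply', ← charFun_eq_integral_exp_I_mul_mul] at hconv
  rw [ft, ← hconv, fourierStieltjes]
  congr with x
  simp only [MeasureTheory.convolution, ContinuousLinearMap.mul_apply']
  rw [← integral_complex_ofReal, ← integral_const_mul]
  congr with y
  rw [← mul_assoc, ← Complex.exp_add]
  push_cast
  ring_nf

lemma integrable_integral_sub {P : Measure ℝ} [IsFiniteMeasure P] {g : ℝ → ℝ}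
    (hg : Integrable g) : Integrable fun x : ℝ => ∫ y : ℝ, g (x - y) ∂P := by
  simpa using (Integrable.convolution_integrand (ContinuousLinearMap.mul ℝ ℝ)
    (integrable_const (1 : ℝ) (μ := P)) hg).integral_prod_left

end FourierStieltjes

section GaussianMollification

variable {μ ν : Measure ℝ} {f h : ℝ → ℝ}

lemma integral_fourierStieltjes_add_gaussianReal [SFinite ν] (hh : Integrable h ν) (u : ℝ) :
    ∫ s, fourierStieltjes ν h (u + s) ∂(ProbabilityTheory.gaussianReal 0 1) =
      fourierStieltjes ν (fun x => h x * Real.exp (-x ^ 2 / 2)) u := by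
  set γ := ProbabilityTheory.gaussianReal 0 1
  have hγ : ∀ x : ℝ, ∫ s : ℝ, Complex.exp (Complex.I * x * s) ∂γ = Real.exp (-x ^ 2 / 2) :=
    fun x => by
      rw [← charFun_eq_integral_exp_I_mul_mul, ProbabilityTheory.charFun_gaussianReal]
      push_cast
      ring_nf
  have hint : Integrable (Function.uncurry fun s x : ℝ =>
      Complex.exp (Complex.I * (u + s : ℝ) * x) * (h x : ℂ)) (γ.prod ν) := by
    have hhc : Integrable (fun x => (h x : ℂ)) ν := hh.ofReal
    exact (hhc.comp_snd γ).bdd_mul (c := 1) (by fun_prop)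
      (Eventually.of_forall fun p => (norm_exp_I_mul_mul (u + p.1) p.2).le)
  simp only [fourierStieltjes]
  rw [integral_integral_swap hint]
  congr with x
  rw [Complex.ofReal_mul, ← hγ x, mul_left_comm, ← integral_const_mul, ← integral_const_mul]
  congr with s
  rw [← Complex.exp_add, mul_comm]
  push_cast
  ring_nf

lemma hasDerivAt_integral_comp_add {E : Type*} [NormedAddCommGroup E] [NormedSpace ℝ E]
    [CompleteSpace E] {γ : Measure ℝ} [IsFiniteMeasure γ] {ψ ψ' : ℝ → E} {C : ℝ}
    (hψ : ∀ u, HasDerivAt ψ (ψ' u) u) (hC : ∀ u, ‖ψ' u‖ ≤ C) {u : ℝ}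
    (hint : Integrable (fun s => ψ (u + s)) γ) :
    HasDerivAt (fun u => ∫ s, ψ (u + s) ∂γ) (∫ s, ψ' (u + s) ∂γ) u := by
  have hψc : Continuous ψ := continuous_iff_continuousAt.2 fun u => (hψ u).continuousAt
  have hψ'm : StronglyMeasurable ψ' :=
    (funext fun u => (hψ u).deriv : deriv ψ = ψ') ▸ stronglyMeasurable_deriv ψ
  exact (hasDerivAt_integral_of_dominated_loc_of_deriv_le (bound := fun _ => C) univ_mem
    (Eventually.of_forall fun v => (hψc.comp (by fun_prop)).aestronglyMeasurable) hint
    (hψ'm.comp_measurable (measurable_const_add u)).aestronglyMeasurable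
    (Eventually.of_forall fun s v _ => hC (v + s)) (integrable_const C)
    (Eventually.of_forall fun s v _ => (hψ (v + s)).comp_add_const v s)).2

lemma fourierStieltjes_id_mul_gaussian_eq [IsFiniteMeasure μ] [SFinite ν] (hh : Integrable h ν)
    (hderiv : ∀ u, HasDerivAt (charFun μ) (Complex.I * fourierStieltjes ν h u) u) :
    fourierStieltjes μ (fun x => x * Real.exp (-x ^ 2 / 2)) =
      fourierStieltjes ν fun x => h x * Real.exp (-x ^ 2 / 2) := by
  funext u
  set γ := ProbabilityTheory.gaussianReal 0 1
  have hmoll : (fun u => ∫ s, charFun μ (u + s) ∂γ) =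
      fourierStieltjes μ fun x => Real.exp (-x ^ 2 / 2) := by
    funext u
    simpa only [fourierStieltjes_one, one_mul] using
      integral_fourierStieltjes_add_gaussianReal (integrable_const (1 : ℝ) (μ := μ)) u
  have hgauss : Integrable (fun x => Real.exp (-x ^ 2 / 2)) μ :=
    .of_bound (by fun_prop) 1 (Eventually.of_forall norm_exp_neg_sq_div_two_le_one)
  have hleft := hasDerivAt_fourierStieltjes hgauss
    (.of_bound (by fun_prop) 1 (Eventually.of_forall norm_mul_exp_neg_sq_div_two_le_one)) u
  have hright : HasDerivAt (fun u => ∫ s, charFun μ (u + s) ∂γ)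
      (∫ s, Complex.I * fourierStieltjes ν h (u + s) ∂γ) u :=
    hasDerivAt_integral_comp_add (C := ∫ x, |h x| ∂ν) hderiv
      (fun v => by simpa using norm_fourierStieltjes_le ν h v)
      (.of_bound (continuous_charFun.comp (by fun_prop)).aestronglyMeasurable _
        (Eventually.of_forall fun s => norm_charFun_le (u + s)))
  rw [hmoll, integral_const_mul, integral_fourierStieltjes_add_gaussianReal hh] at hright
  exact mul_left_cancel₀ Complex.I_ne_zero (hleft.unique hright)

theorem signedDensityEq_id_of_hasDerivAt_charFun [IsFiniteMeasure μ] [SFinite ν]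
    (hh : Integrable h ν)
    (hderiv : ∀ u, HasDerivAt (charFun μ) (Complex.I * fourierStieltjes ν h u) u) :
    SignedDensityEq μ (fun x => x) ν h := by
  have hxw : Integrable (fun x => x * Real.exp (-x ^ 2 / 2)) μ :=
    .of_bound (by fun_prop) 1 (Eventually.of_forall norm_mul_exp_neg_sq_div_two_le_one)
  have hhw : Integrable (fun x => h x * Real.exp (-x ^ 2 / 2)) ν :=
    hh.mul_bdd (c := 1) (by fun_prop) (Eventually.of_forall norm_exp_neg_sq_div_two_le_one)
  exact .of_mul_right aemeasurable_id hh.aemeasurable (by fun_prop) (fun x => Real.exp_pos _)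
    (signedDensityEq_of_fourierStieltjes_eq hxw hhw (fourierStieltjes_id_mul_gaussian_eq hh hderiv))

end GaussianMollification

section IncrementLaw

variable {N : ℝ → ℝ} {Δ : ℝ} {P : Measure ℝ}

lemma IncrementLawN.isProbabilityMeasure (hP : IncrementLawN P Δ N) : IsProbabilityMeasure P := by
  have h : (P.real Set.univ : ℂ) = 1 := by simpa using hP 0
  have hreal : P.real Set.univ = 1 := by exact_mod_cast h
  exact ⟨(ENNReal.toReal_eq_one_iff _).1 hreal⟩

lemma IncrementLawN.hasDerivAt_charFun (hP : IncrementLawN P Δ N) (hN : AEStronglyMeasurable N)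
    (hxN : Integrable fun x : ℝ => x * N x) (u : ℝ) :
    HasDerivAt (charFun P) (Complex.I * (Δ * (charFun P u * ft (fun x => x * N x) u))) u := by
  have hψ : charFun P = fun u : ℝ => Complex.exp
      (Δ * ∫ x : ℝ, (Complex.exp (Complex.I * u * x) - 1) * (N x : ℂ)) :=
    funext fun u => (charFun_eq_integral_exp_I_mul_mul P u).trans (hP u)
  rw [hψ]
  refine ((hasDerivAt_integral_exp_sub_one_mul hN hxN u).const_mul (Δ : ℂ)).cexp.congr_deriv ?_
  rw [ft, fourierStieltjes]
  ring

theorem IncrementLawN.signedDensityEq_id (hP : IncrementLawN P Δ N)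
    (hN : AEStronglyMeasurable N) (hxN : Integrable fun x : ℝ => x * N x) :
    SignedDensityEq P (fun x => x) volume fun x => Δ * ∫ y, (x - y) * N (x - y) ∂P := by
  have := hP.isProbabilityMeasure
  refine signedDensityEq_id_of_hasDerivAt_charFun
    ((integrable_integral_sub hxN).const_mul Δ) fun u => ?_
  rw [fourierStieltjes_const_mul, fourierStieltjes_integral_sub hxN]
  exact hP.hasDerivAt_charFun hN hxN u

end IncrementLaw

lemma aestronglyMeasurable_of_integrable_abs_mul {N : ℝ → ℝ}
    (h : Integrable fun x : ℝ => |x| * N x) : AEStronglyMeasurable N := by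
  refine AEStronglyMeasurable.congr
    ((Measurable.aestronglyMeasurable (f := fun x : ℝ => |x|⁻¹) (by fun_prop)).mul
      h.aestronglyMeasurable) ?_
  filter_upwards [Measure.ae_ne volume (0 : ℝ)] with x hx
  exact inv_mul_cancel_left₀ (abs_ne_zero.2 hx) _

theorem increment_density_general (N : ℝ → ℝ)
    (hxN : Integrable (fun x : ℝ => |x| * N x))
    (g : ℝ → ℝ) (hg : ∀ x, g x = x * N x)
    (Δ : ℝ) (hΔ : Δ ≠ 0)
    (P : Measure ℝ) (hP : IncrementLawN P Δ N) :
    Integrable (fun x => x) P ∧ ∀ A : Set ℝ, MeasurableSet A →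
      Δ⁻¹ * (∫ x in A, x ∂P) = ∫ x in A, (∫ y : ℝ, g (x - y) ∂P) := by
  obtain rfl : g = fun x => x * N x := funext hg
  have hN : AEStronglyMeasurable N := aestronglyMeasurable_of_integrable_abs_mul hxN
  have hgi : Integrable fun x : ℝ => x * N x :=
    hxN.mono (measurable_id.aestronglyMeasurable.mul hN) (Eventually.of_forall fun x => by simp)
  have := hP.isProbabilityMeasure
  have hdens := (integrable_integral_sub (P := P) hgi).const_mul Δ
  have hsigned := hP.signedDensityEq_id hN hgi
  have hid : Integrable (fun x => x) P := hsigned.integrable measurable_id hdens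
  refine ⟨hid, fun A hA => ?_⟩
  rw [hsigned.setIntegral_eq hid hdens hA, integral_const_mul, inv_mul_cancel_left₀ hΔ]

/-- Proposition 6.1: the measure `μ_Δ(dx) = Δ⁻¹ x P_Δ(dx)` has density
`h_Δ(x) = E[g(x - Z₁^Δ)]` with respect to Lebesgue measure. -/
theorem increment_density (N : ℝ → ℝ) (hN0 : ∀ x, 0 ≤ N x)
    (hNlevy : Integrable (fun x : ℝ => min 1 |x| * N x))
    (hxN : Integrable (fun x : ℝ => |x| * N x))
    (g : ℝ → ℝ) (hg : ∀ x, g x = x * N x)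
    (Δ : ℝ) (hΔ : 0 < Δ)
    (P : Measure ℝ) [IsProbabilityMeasure P] (hP : IncrementLawN P Δ N) :
    ∀ A : Set ℝ, MeasurableSet A →
      Δ⁻¹ * (∫ x in A, x ∂P) = ∫ x in A, (∫ y : ℝ, g (x - y) ∂P) := by
  exact (increment_density_general N hxN g hg Δ hΔ.ne' P hP).2

end LevyAdapt
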